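/- Let e₀, e₁ denote the standard orthonormal basis of ℂ² and Φ± = (e₀ ⊗ e₀ ± e₁ ⊗ e₁)/√2 ∈ ℂ² ⊗ ℂ². Define Ψ₄ = √(3/4) e₀⊗Φ⁺⊗Φ⁺⊗e₀ + √(1/12) e₀⊗Φ⁺⊗Φ⁻⊗e₁ − √(1/12) e₁⊗Φ⁻⊗Φ⁺⊗e₀ + √(1/12) e₁⊗Φ⁻⊗Φ⁻⊗e₁ in ℂ² ⊗ (ℂ² ⊗ ℂ²) ⊗ (ℂ² ⊗ ℂ²) ⊗ ℂ² (slots U, RA, SB, W, with e₀, e₁ in the U and W slots encoding outcomes + and −). Then the contraction of Ψ₄ against e₁ in the U slot equals √(1/12) Φ⁻ ⊗ (−Φ⁺ ⊗ e₀ + Φ⁻ ⊗ e₁); this vector is nonzero and is NOT of the form χ ⊗ φ for any vector χ ∈ (ℂ²⊗ℂ²) ⊗ (ℂ²⊗ℂ²) and unit vector φ ∈ ℂ² in the W slot. Moreover ⟨e₁⊗Φ⁻⊗Φ⁻⊗e₁, Ψ₄⟩ = √(1/12) ≠ 0, so the outcome in which both Ursula and Wigner obtain '−' has probability 1/12. 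-/

import Mathlib

open scoped TensorProduct

set_option synthInstance.maxHeartbeats 1000000
set_option maxHeartbeats 1000000

noncomputable section

/-- The qubit space `ℂ²`. -/
abbrev Q2 : Type := EuclideanSpace ℂ (Fin 2)

/-- The standard orthonormal basis `e₀, e₁` of `ℂ²`. -/
def e (i : Fin 2) : Q2 := EuclideanSpace.single i 1

/-- `√x` as a complex scalar. -/
def c (x : ℝ) : ℂ := (Real.sqrt x : ℂ)

/-- The linear functional `⟨φ| = ⟪φ, ·⟫` on an inner product space. -/
def bra {H : Type*} [NormedAddCommGroup H] [InnerProductSpace ℂ H] (φ : H) :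
    H →ₗ[ℂ] ℂ :=
  (innerSL ℂ φ).toLinearMap

/-- Contraction `(f ⊗ I) : H ⊗ M →ₗ M` of the first slot against a functional `f`. -/
def contractF {H M : Type*} [AddCommGroup H] [Module ℂ H] [AddCommGroup M]
    [Module ℂ M] (f : H →ₗ[ℂ] ℂ) : H ⊗[ℂ] M →ₗ[ℂ] M :=
  (TensorProduct.lid ℂ M).toLinearMap ∘ₗ TensorProduct.map f LinearMap.id

/-- Contraction `(⟨φ| ⊗ I) : H ⊗ M →ₗ M` against a vector `φ` in the first slot. -/
def contractFirst {H M : Type*} [NormedAddCommGroup H] [InnerProductSpace ℂ H]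
    [AddCommGroup M] [Module ℂ M] (φ : H) : H ⊗[ℂ] M →ₗ[ℂ] M :=
  contractF (bra φ)

/-- Contraction `(I ⊗ ⟨φ|) : M ⊗ H →ₗ M` against a vector `φ` in the last slot. -/
def contractLast {H M : Type*} [NormedAddCommGroup H] [InnerProductSpace ℂ H]
    [AddCommGroup M] [Module ℂ M] (φ : H) : M ⊗[ℂ] H →ₗ[ℂ] M :=
  (TensorProduct.rid ℂ M).toLinearMap ∘ₗ TensorProduct.map LinearMap.id (bra φ)

/-- The functional `f ⊗ g` on a binary tensor product. -/
def braT {H K : Type*} [AddCommGroup H] [Module ℂ H] [AddCommGroup K] [Module ℂ K]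
    (f : H →ₗ[ℂ] ℂ) (g : K →ₗ[ℂ] ℂ) : H ⊗[ℂ] K →ₗ[ℂ] ℂ :=
  LinearMap.mul' ℂ ℂ ∘ₗ TensorProduct.map f g

/-- The Bell state `Φ⁺ = (e₀ ⊗ e₀ + e₁ ⊗ e₁)/√2`. -/
def Φp : Q2 ⊗[ℂ] Q2 := (c 2)⁻¹ • (e 0 ⊗ₜ[ℂ] e 0 + e 1 ⊗ₜ[ℂ] e 1)

/-- The Bell state `Φ⁻ = (e₀ ⊗ e₀ − e₁ ⊗ e₁)/√2`. -/
def Φm : Q2 ⊗[ℂ] Q2 := (c 2)⁻¹ • (e 0 ⊗ₜ[ℂ] e 0 - e 1 ⊗ₜ[ℂ] e 1)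

/-- The functional `⟨Φ⁻| = (⟨e₀| ⊗ ⟨e₀| − ⟨e₁| ⊗ ⟨e₁|)/√2` on `ℂ² ⊗ ℂ²`
(the bra dual to `Φ⁻` with respect to the induced inner product). -/
def braΦm : Q2 ⊗[ℂ] Q2 →ₗ[ℂ] ℂ :=
  (c 2)⁻¹ • (braT (bra (e 0)) (bra (e 0)) - braT (bra (e 1)) (bra (e 1)))

/-- The final state `Ψ₄` of the Frauchiger–Renner protocol (Eq. (3) of the paper),
with slots `U, RA, SB, W` (associated as `U ⊗ (RA ⊗ (SB ⊗ W))`); the basis vectors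
`e₀, e₁` in the `U` and `W` slots encode the outcomes `+` and `−`. -/
def Ψ₄ : Q2 ⊗[ℂ] ((Q2 ⊗[ℂ] Q2) ⊗[ℂ] ((Q2 ⊗[ℂ] Q2) ⊗[ℂ] Q2)) :=
  c (3/4) • (e 0 ⊗ₜ[ℂ] (Φp ⊗ₜ[ℂ] (Φp ⊗ₜ[ℂ] e 0)))
    + c (1/12) • (e 0 ⊗ₜ[ℂ] (Φp ⊗ₜ[ℂ] (Φm ⊗ₜ[ℂ] e 1)))
    + (-(c (1/12))) • (e 1 ⊗ₜ[ℂ] (Φm ⊗ₜ[ℂ] (Φp ⊗ₜ[ℂ] e 0)))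
    + c (1/12) • (e 1 ⊗ₜ[ℂ] (Φm ⊗ₜ[ℂ] (Φm ⊗ₜ[ℂ] e 1)))

section

variable {H K M : Type*} [AddCommGroup H] [Module ℂ H] [AddCommGroup K] [Module ℂ K]
  [AddCommGroup M] [Module ℂ M]

lemma contractF_tmul (f : H →ₗ[ℂ] ℂ) (x : H) (y : M) :
    contractF f (x ⊗ₜ[ℂ] y) = f x • y := by
  simp [contractF]

lemma braT_tmul (f : H →ₗ[ℂ] ℂ) (g : K →ₗ[ℂ] ℂ) (x : H) (y : K) :
    braT f g (x ⊗ₜ[ℂ] y) = f x * g y := by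
  simp [braT]

lemma braT_assoc_tmul (f : H →ₗ[ℂ] ℂ) (g : K →ₗ[ℂ] ℂ) (h : M →ₗ[ℂ] ℂ)
    (χ : H ⊗[ℂ] K) (φ : M) :
    braT f (braT g h) (TensorProduct.assoc ℂ H K M (χ ⊗ₜ[ℂ] φ)) = braT f g χ * h φ := by
  induction χ using TensorProduct.induction_on with
  | zero => simp
  | tmul x y => simp only [TensorProduct.assoc_tmul, braT_tmul, mul_assoc]
  | add a b ha hb => simp only [TensorProduct.add_tmul, map_add, ha, hb, add_mul]

end

lemma bra_e_apply (i j : Fin 2) : bra (e i) (e j) = if i = j then 1 else 0 := by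
  simp [bra, e, EuclideanSpace.inner_single_left]

lemma c_two_inv_mul_self : (c 2)⁻¹ * (c 2)⁻¹ = 2⁻¹ := by
  rw [← mul_inv, c, ← Complex.ofReal_mul, Real.mul_self_sqrt zero_le_two, Complex.ofReal_ofNat]

lemma c_ne_zero {x : ℝ} (hx : 0 < x) : c x ≠ 0 :=
  Complex.ofReal_ne_zero.mpr (Real.sqrt_pos.mpr hx).ne'

/-- The functional `⟨Φ⁺|` on `ℂ² ⊗ ℂ²`. -/
def braΦp : Q2 ⊗[ℂ] Q2 →ₗ[ℂ] ℂ :=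
  (c 2)⁻¹ • (braT (bra (e 0)) (bra (e 0)) + braT (bra (e 1)) (bra (e 1)))

lemma braΦp_Φp : braΦp Φp = 1 := by
  simp [braΦp, Φp, braT_tmul, bra_e_apply]
  linear_combination 2 * c_two_inv_mul_self

lemma braΦp_Φm : braΦp Φm = 0 := by
  simp [braΦp, Φm, braT_tmul, bra_e_apply]

lemma braΦm_Φp : braΦm Φp = 0 := by
  simp [braΦm, Φp, braT_tmul, bra_e_apply]

lemma braΦm_Φm : braΦm Φm = 1 := by
  simp [braΦm, Φm, braT_tmul, bra_e_apply]
  linear_combination 2 * c_two_inv_mul_self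

lemma contractFirst_e_one_Ψ₄ :
    contractFirst (e 1) Ψ₄ =
      c (1/12) • (Φm ⊗ₜ[ℂ] ((-Φp) ⊗ₜ[ℂ] e 0 + Φm ⊗ₜ[ℂ] e 1)) := by
  simp only [contractFirst, Ψ₄, map_add, map_smul, contractF_tmul, bra_e_apply,
    TensorProduct.tmul_add, TensorProduct.neg_tmul, TensorProduct.tmul_neg]
  simp only [one_ne_zero, if_true, if_false, zero_smul, one_smul, smul_zero,
    zero_add, smul_add, smul_neg]
  congr 1
  exact neg_smul (c (1/12)) (Φm ⊗ₜ[ℂ] (Φp ⊗ₜ[ℂ] e 0))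

/-- The amplitudes of the relative state of `RA ⊗ SB ⊗ W` given Ursula's outcome `−`. -/
lemma braT_contractFirst_e_one_Ψ₄ (f : Q2 ⊗[ℂ] Q2 →ₗ[ℂ] ℂ) (g : Q2 →ₗ[ℂ] ℂ) :
    braT braΦm (braT f g) (contractFirst (e 1) Ψ₄) =
      c (1/12) * (-(f Φp * g (e 0)) + f Φm * g (e 1)) := by
  simp only [contractFirst_e_one_Ψ₄, map_smul, braT_tmul, map_add, map_neg, braΦm_Φm,
    smul_eq_mul, one_mul, neg_mul]

/-- Eq. (12) of the paper: the contraction of `Ψ₄` against `e₁` in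
Ursula's slot equals `√(1/12) Φ⁻ ⊗ (−Φ⁺ ⊗ e₀ + Φ⁻ ⊗ e₁)`; this vector is nonzero
and does not factor as `χ ⊗ φ` with `φ` a unit vector in Wigner's slot (Wigner's
relative state given Ursula's outcome `−` is not pure); moreover
`⟨e₁ ⊗ Φ⁻ ⊗ Φ⁻ ⊗ e₁, Ψ₄⟩ = √(1/12) ≠ 0`, so the outcome in which both Ursula and
Wigner obtain `−` has probability `1/12`. -/
theorem frauchiger_renner_direct_relative_state :
    (contractFirst (e 1) Ψ₄ =
      c (1/12) • (Φm ⊗ₜ[ℂ] ((-Φp) ⊗ₜ[ℂ] e 0 + Φm ⊗ₜ[ℂ] e 1))) ∧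
    contractFirst (e 1) Ψ₄ ≠ (0 : (Q2 ⊗[ℂ] Q2) ⊗[ℂ] ((Q2 ⊗[ℂ] Q2) ⊗[ℂ] Q2)) ∧
    (¬ ∃ (χ : (Q2 ⊗[ℂ] Q2) ⊗[ℂ] (Q2 ⊗[ℂ] Q2)) (φ : Q2), ‖φ‖ = 1 ∧
      contractFirst (e 1) Ψ₄ =
        TensorProduct.assoc ℂ (Q2 ⊗[ℂ] Q2) (Q2 ⊗[ℂ] Q2) Q2 (χ ⊗ₜ[ℂ] φ)) ∧
    (braT (bra (e 1)) (braT braΦm (braT braΦm (bra (e 1)))) Ψ₄ = c (1/12) ∧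
      c (1/12) ≠ 0) := by
  have hc : c (1/12) ≠ 0 := c_ne_zero (by norm_num)
  refine ⟨contractFirst_e_one_Ψ₄, fun h => ?_, ?_, ?_, hc⟩
  · have hm := braT_contractFirst_e_one_Ψ₄ braΦm (bra (e 1))
    rw [h] at hm
    simp only [map_zero, braΦm_Φm, braΦm_Φp, if_true, bra_e_apply, zero_mul, neg_zero, zero_add,
      mul_one] at hm
    exact hc hm.symm
  · rintro ⟨χ, φ, -, h⟩
    have amp (f : Q2 ⊗[ℂ] Q2 →ₗ[ℂ] ℂ) (g : Q2 →ₗ[ℂ] ℂ) :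
        braT braΦm f χ * g φ = c (1/12) * (-(f Φp * g (e 0)) + f Φm * g (e 1)) := by
      rw [← braT_contractFirst_e_one_Ψ₄, h, braT_assoc_tmul]
    have hpp := amp braΦp (bra (e 0))
    have hpm := amp braΦp (bra (e 1))
    have hmm := amp braΦm (bra (e 1))
    simp only [braΦp_Φp, braΦp_Φm, braΦm_Φp, braΦm_Φm, bra_e_apply, one_ne_zero, zero_ne_one,
      if_true, if_false, mul_one, mul_zero, neg_zero, add_zero, zero_add] at hpp hpm hmm
    rcases mul_eq_zero.mp hpm with h0 | h0
    · rw [h0, zero_mul] at hpp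
      exact hc (by linear_combination hpp)
    · rw [h0, mul_zero] at hmm
      exact hc hmm.symm
  · simp only [Ψ₄, map_add, map_smul, braT_tmul, braΦm_Φp, braΦm_Φm, bra_e_apply]
    simp

end
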